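/- arXiv:2604.13212 — 3 statements merged into one kernel-verified Lean document; each statement's English description precedes it below -/
import Mathlib

section
/- For any unicyclic graph G (a connected graph containing exactly one cycle), ST^(4)*(G) = χ*(G), where χ*(G) is the fractional chromatic number of G. -/
/-!
Both invariants equal `r`, where `r = 2` if the unique cycle has even length and `r = 2 + 1 / k` if
it has length `2 k + 1`. The proof is the sandwich `ST⁽⁴⁾* ≤ r ≤ χ* ≤ ST⁽⁴⁾*`
(`star_eq_of_bounds`).

* `χ* ≤ ST⁽⁴⁾*`: a complete legal sequence is a greedy list-coloring algorithm for lists of size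
  `S + T` (`exists_list_coloring`), so an `(s,t)`-degenerate graph is `(s+t,t)`-colorable.
* `r ≤ χ*`: adjacent vertices use disjoint color sets (`ABColorable.two_mul_le`), and a color
  appears on at most `k` vertices of a cycle of length `2 k + 1` (`ABColorable.odd_cycle`).
* `ST⁽⁴⁾* ≤ r`: the game is played on the cycle in rounds. A round shades every other vertex
  `c 0, c 2, c 4, …`. After `c 0` has been shaded, `c 1` has a smaller value of `S + T` than `c 2`,
  so it can be saved when `c 2` is shaded; this lowers `c 3`, which is then saved by `c 4`, and so
  on. Thus each unshaded vertex pays only one unit per round (`CycLabel.round`). On an odd cycle,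
  `2 k + 1` rounds with shifted starting points show that `(k+1,k)` suffices
  (`CycLabel.win_odd`). On an even cycle the last vertex is hit twice in the first round; from then
  on it is smaller by one and can be saved in the first step of each round, so `(t+1,t)` suffices
  for every `t` (`CycLabel.win_even`).

Since the cycle is unique, it has no chords (`cycLabel_of_unique`), and the rest of the graph is
attached to it by adding vertices of degree one, which never matter when `t ≤ s` (`win_univ`).
-/


open scoped Classical

noncomputable section

namespace StrictDeg

/-- The state of the `ShadeSave` process: the active vertex set (the vertex set of the
current induced subgraph), the current shield, and the current target. -/
structure State (V : Type) where
  A : Finset V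
  S : V → ℕ
  T : V → ℕ

variable {V : Type}

/-- The output of the operation `ShadeSave(G[A], S, T, u, W)`. -/
def applyStep (G : SimpleGraph V) (st : State V) (u : V) (W : Finset V) : State V where
  A := if st.T u = 1 then st.A.erase u else st.A
  S := fun v => if G.Adj u v ∧ v ∈ st.A ∧ v ∉ W then st.S v - 1 else st.S v
  T := fun v => if v = u ∧ 1 < st.T u then st.T u - 1 else st.T v

/-- Legality of the operation `ShadeSave(G[A], S, T, u, W)`:  `u` is a vertex of the current
graph, `W` is a set of neighbors of `u` in the current graph,
`S u + T u > ∑_{w ∈ W} (S w + T w)`, and the output shield is nonnegative (in `ℕ` terms: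
every neighbor of `u` in the current graph that is not saved has shield value at least 1). -/
def LegalStep (G : SimpleGraph V) (st : State V) (u : V) (W : Finset V) : Prop :=
  u ∈ st.A ∧
  (∀ w ∈ W, w ∈ st.A ∧ G.Adj u w) ∧
  (∑ w ∈ W, (st.S w + st.T w)) < st.S u + st.T u ∧
  (∀ v ∈ st.A, G.Adj u v → v ∉ W → 1 ≤ st.S v)

/-- `LegalSeq G st l` means `l` is a legal sequence of `ShadeSave` operations starting
from the state `st`. -/
def LegalSeq (G : SimpleGraph V) : State V → List (V × Finset V) → Prop
  | _, [] => True
  | st, op :: rest => LegalStep G st op.1 op.2 ∧ LegalSeq G (applyStep G st op.1 op.2) rest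

/-- The final state after applying the operations in `l` in order. -/
def finalState (G : SimpleGraph V) (st : State V) (l : List (V × Finset V)) : State V :=
  l.foldl (fun s op => applyStep G s op.1 op.2) st

/-- The induced subgraph of `G` on `A`, with shield `S` and target `T`, admits a complete
legal sequence, i.e. it is `ST⁽³⁾`-`(S,T)`-degenerate. -/
def ST3DegOn (G : SimpleGraph V) (A : Finset V) (S T : V → ℕ) : Prop :=
  ∃ l : List (V × Finset V),
    LegalSeq G ⟨A, S, T⟩ l ∧ (finalState G ⟨A, S, T⟩ l).A = ∅

/-- The induced subgraph of `G` on `A`, with shield `S` and target `T`, admits a complete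
restricted (every operation saves on at most one vertex) legal sequence, i.e. it is
`ST⁽⁴⁾`-`(S,T)`-degenerate. -/
def ST4DegOn (G : SimpleGraph V) (A : Finset V) (S T : V → ℕ) : Prop :=
  ∃ l : List (V × Finset V),
    LegalSeq G ⟨A, S, T⟩ l ∧ (∀ op ∈ l, op.2.card ≤ 1) ∧
      (finalState G ⟨A, S, T⟩ l).A = ∅

/-- `G` is `ST⁽³⁾`-`(S,T)`-degenerate. -/
def ST3Deg [Fintype V] (G : SimpleGraph V) (S T : V → ℕ) : Prop :=
  ST3DegOn G Finset.univ S T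

/-- `G` is `ST⁽⁴⁾`-`(S,T)`-degenerate. -/
def ST4Deg [Fintype V] (G : SimpleGraph V) (S T : V → ℕ) : Prop :=
  ST4DegOn G Finset.univ S T

/-- The fractional strict type-3 degeneracy
`ST⁽³⁾*(G) = inf {(s+t)/t : G is ST⁽³⁾-(s,t)-degenerate}`. -/
def ST3Star [Fintype V] (G : SimpleGraph V) : ℝ :=
  sInf { x : ℝ | ∃ s t : ℕ, 1 ≤ t ∧ ST3Deg G (fun _ => s) (fun _ => t) ∧
    x = ((s : ℝ) + t) / t }

/-- The fractional strict type-4 degeneracy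
`ST⁽⁴⁾*(G) = inf {(s+t)/t : G is ST⁽⁴⁾-(s,t)-degenerate}`. -/
def ST4Star [Fintype V] (G : SimpleGraph V) : ℝ :=
  sInf { x : ℝ | ∃ s t : ℕ, 1 ≤ t ∧ ST4Deg G (fun _ => s) (fun _ => t) ∧
    x = ((s : ℝ) + t) / t }

/-- A cover `𝓗 = (L, H)` of the graph `G`. -/
structure Cover (G : SimpleGraph V) where
  /-- The vertex type of the cover graph `H`. -/
  U : Type
  fin : Fintype U
  /-- The cover graph. -/
  H : SimpleGraph U
  /-- The lists: `L v` is the part of the partition of `V(H)` corresponding to `v`. -/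
  L : V → Finset U
  part : ∀ x : U, ∃! v : V, x ∈ L v
  indep : ∀ v : V, ∀ x ∈ L v, ∀ y ∈ L v, ¬ H.Adj x y
  cross : ∀ u v : V, ∀ x ∈ L u, ∀ y ∈ L v, H.Adj x y → G.Adj u v
  matching : ∀ u v : V, G.Adj u v → ∀ x ∈ L u, ∀ y ∈ L v, ∀ y' ∈ L v,
      H.Adj x y → H.Adj x y' → y = y'

/-- `G` is `(𝓗, b)`-colorable: there is an independent set of the cover graph meeting
every list in at least `b` vertices. -/
def Cover.Colorable {G : SimpleGraph V} (C : Cover G) (b : ℕ) : Prop :=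
  ∃ I : Finset C.U, (∀ x ∈ I, ∀ y ∈ I, ¬ C.H.Adj x y) ∧ ∀ v : V, b ≤ (I ∩ C.L v).card

/-- `G` is `(a,b)`-DP-colorable. -/
def DPColorable (G : SimpleGraph V) (a b : ℕ) : Prop :=
  ∀ C : Cover G, (∀ v : V, (C.L v).card = a) → C.Colorable b

/-- The fractional DP-chromatic number
`χ*_DP(G) = inf {a/b : G is (a,b)-DP-colorable}`. -/
def DPStar (G : SimpleGraph V) : ℝ :=
  sInf { x : ℝ | ∃ a b : ℕ, 1 ≤ b ∧ b ≤ a ∧ DPColorable G a b ∧ x = (a : ℝ) / b }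

/-- `G` is `(F₁, F₂)`-DP-colorable. -/
def DPColorableFn (G : SimpleGraph V) (F₁ F₂ : V → ℕ) : Prop :=
  ∀ C : Cover G, (∀ v : V, (C.L v).card = F₁ v) →
    ∃ I : Finset C.U, (∀ x ∈ I, ∀ y ∈ I, ¬ C.H.Adj x y) ∧
      ∀ v : V, (I ∩ C.L v).card = F₂ v


/-- `G` is `(a,b)`-colorable: each vertex receives a `b`-element subset of `{1,…,a}` so that
adjacent vertices receive disjoint sets. -/
def ABColorable {V : Type} (G : SimpleGraph V) (a b : ℕ) : Prop :=
  ∃ f : V → Finset (Fin a), (∀ v, (f v).card = b) ∧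
    ∀ u v, G.Adj u v → Disjoint (f u) (f v)

/-- The fractional chromatic number `χ*(G) = inf {a/b : G is (a,b)-colorable}` (for finite
graphs this infimum is attained). -/
def FracChrom {V : Type} (G : SimpleGraph V) : ℝ :=
  sInf { x : ℝ | ∃ a b : ℕ, 1 ≤ b ∧ b ≤ a ∧ ABColorable G a b ∧ x = (a : ℝ) / b }

/-! ### Degeneracy gives colorings -/

/-- Greedy list coloring along a legal sequence. If each active vertex has a list of exactly
`S v + T v` colors, the legality inequality provides a color of `u` missing from the lists of all
saved neighbors; giving it to `u` and trimming the lists of the other neighbors leaves a list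
assignment for the next state. -/
lemma exists_list_coloring {α : Type} (G : SimpleGraph V) (l : List (V × Finset V)) :
    ∀ (st : State V), LegalSeq G st l → (finalState G st l).A = ∅ → (∀ v ∈ st.A, 1 ≤ st.T v) →
      ∀ L : V → Finset α, (∀ v ∈ st.A, (L v).card = st.S v + st.T v) →
        ∃ f : V → Finset α, (∀ v ∈ st.A, f v ⊆ L v ∧ (f v).card = st.T v) ∧
          ∀ u ∈ st.A, ∀ v ∈ st.A, G.Adj u v → Disjoint (f u) (f v) := by
  induction l with
  | nil =>
    intro st _ hfin _ L _
    simp only [finalState, List.foldl_nil] at hfin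
    exact ⟨fun _ => ∅, by simp [hfin], by simp [hfin]⟩
  | cons op rest ih =>
    obtain ⟨u, W⟩ := op
    intro st hl hfin hT L hL
    obtain ⟨⟨huA, hWA, hsum, hN⟩, hrest⟩ := hl
    simp only at huA hWA hsum hN hrest
    have hcol : ∃ x ∈ L u, x ∉ W.biUnion L := by
      by_contra! hcon
      have h1 : (L u).card ≤ (W.biUnion L).card := Finset.card_le_card hcon
      have h2 : (W.biUnion L).card ≤ ∑ w ∈ W, (L w).card := Finset.card_biUnion_le
      have h3 : ∑ w ∈ W, (L w).card = ∑ w ∈ W, (st.S w + st.T w) :=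
        Finset.sum_congr rfl fun w hw => hL w (hWA w hw).1
      have := hL u huA
      omega
    obtain ⟨x, hxu, hxW⟩ := hcol
    have hsub : ∀ v, v ∈ (applyStep G st u W).A → v ∈ st.A := by
      intro v hv
      simp only [applyStep] at hv
      split_ifs at hv
      · exact Finset.mem_of_mem_erase hv
      · exact hv
    -- The trimmed lists of the next state: they avoid `x` at `u` and at every neighbor of `u`.
    have hL' : ∀ v, ∃ M : Finset α, v ∈ (applyStep G st u W).A →
        M ⊆ L v ∧ M.card = (applyStep G st u W).S v + (applyStep G st u W).T v ∧
          ((v = u ∨ G.Adj u v) → x ∉ M) := by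
      intro v
      by_cases hv : v ∈ (applyStep G st u W).A
      swap
      · exact ⟨∅, fun h => absurd h hv⟩
      have hvA := hsub v hv
      by_cases hvu : v = u
      · subst hvu
        have hT1 : st.T v ≠ 1 := by
          intro h
          simp [applyStep, h] at hv
        have := hT v huA
        refine ⟨(L v).erase x, fun _ => ⟨Finset.erase_subset _ _, ?_, by simp⟩⟩
        rw [Finset.card_erase_of_mem hxu, hL v huA]
        have h1 : 1 < st.T v := by omega
        simp [applyStep, h1]
        omega
      · by_cases hadj : G.Adj u v
        · by_cases hvW : v ∈ W
          · refine ⟨L v, fun _ => ⟨subset_rfl, ?_, fun _ hx => hxW ?_⟩⟩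
            · simp [applyStep, hvu, hvW, hL v hvA]
            · exact Finset.mem_biUnion.2 ⟨v, hvW, hx⟩
          · have h1 := hN v hvA hadj hvW
            have h2 : (st.S v - 1) + st.T v ≤ ((L v).erase x).card := by
              have := Finset.pred_card_le_card_erase (s := L v) (a := x)
              rw [hL v hvA] at this
              omega
            obtain ⟨M, hM, hMc⟩ := Finset.exists_subset_card_eq h2
            refine ⟨M, fun _ => ⟨hM.trans (Finset.erase_subset _ _), ?_, fun _ hx => ?_⟩⟩
            · simp [applyStep, hvu, hvW, hadj, hvA, hMc]
            · simpa using hM hx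
        · refine ⟨L v, fun _ => ⟨subset_rfl, ?_, fun h => ?_⟩⟩
          · simp [applyStep, hvu, hadj, hL v hvA]
          · tauto
    choose M hM using hL'
    have hT' : ∀ v ∈ (applyStep G st u W).A, 1 ≤ (applyStep G st u W).T v := by
      intro v hv
      have := hT v (hsub v hv)
      simp only [applyStep]
      split_ifs <;> omega
    obtain ⟨g, hg, hdis⟩ := ih (applyStep G st u W) hrest hfin hT' M
      (fun v hv => (hM v hv).2.1)
    have hA : ∀ v ∈ st.A, v ≠ u → v ∈ (applyStep G st u W).A := by
      intro v hv hne
      simp only [applyStep]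
      split_ifs
      · exact Finset.mem_erase.2 ⟨hne, hv⟩
      · exact hv
    have hTne : ∀ v, v ≠ u → (applyStep G st u W).T v = st.T v := by
      intro v hne
      simp [applyStep, hne]
    have huA' : 1 < st.T u → u ∈ (applyStep G st u W).A := by
      intro h
      have : st.T u ≠ 1 := by omega
      simp [applyStep, this, huA]
    have huX : ∀ v ∈ st.A, G.Adj u v →
        Disjoint (if 1 < st.T u then insert x (g u) else {x}) (g v) := by
      intro v hv hadj
      have hv' := hA v hv hadj.ne'
      have hxv : x ∉ g v := fun h => (hM v hv').2.2 (Or.inr hadj) ((hg v hv').1 h)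
      split_ifs with h
      · exact Finset.disjoint_insert_left.2 ⟨hxv, hdis u (huA' h) v hv' hadj⟩
      · simpa using hxv
    refine ⟨fun v => if v = u then (if 1 < st.T u then insert x (g u) else {x}) else g v,
      ?_, ?_⟩
    · intro v hv
      by_cases hvu : v = u
      · subst hvu
        have := hT v hv
        by_cases h : 1 < st.T v
        · have hmem := huA' h
          have hxg : x ∉ g v := fun hx => (hM v hmem).2.2 (Or.inl rfl) ((hg v hmem).1 hx)
          have hc : (g v).card = st.T v - 1 := by
            rw [(hg v hmem).2]
            simp [applyStep, h]
          simp only [if_true, if_pos h]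
          refine ⟨Finset.insert_subset hxu ((hg v hmem).1.trans (hM v hmem).1), ?_⟩
          rw [Finset.card_insert_of_notMem hxg, hc]
          omega
        · simp only [if_true, if_neg h]
          refine ⟨by simpa using hxu, ?_⟩
          rw [Finset.card_singleton]
          omega
      · have hv' := hA v hv hvu
        simp only [if_neg hvu]
        exact ⟨(hg v hv').1.trans (hM v hv').1, by rw [(hg v hv').2, hTne v hvu]⟩
    · intro a ha b hb hab
      by_cases hau : a = u
      · subst hau
        have hba : b ≠ a := hab.ne'
        simpa [hba] using huX b hb hab
      · by_cases hbu : b = u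
        · subst hbu
          simpa [hau] using (huX a ha hab.symm).symm
        · simpa [hau, hbu] using hdis a (hA a ha hau) b (hA b hb hbu) hab

lemma ST4Deg.abColorable [Fintype V] {G : SimpleGraph V} {s t : ℕ} (ht : 1 ≤ t)
    (h : ST4Deg G (fun _ => s) (fun _ => t)) : ABColorable G (s + t) t := by
  obtain ⟨l, hl, _, hfin⟩ := h
  obtain ⟨f, hf, hd⟩ := exists_list_coloring (α := Fin (s + t)) G l _ hl hfin
    (fun v _ => ht) (fun _ => Finset.univ) (by simp)
  exact ⟨f, fun v => (hf v (Finset.mem_univ v)).2,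
    fun u v => hd u (Finset.mem_univ u) v (Finset.mem_univ v)⟩

/-! ### A relaxed game -/

/-- A bookkeeping variant of the restricted `ShadeSave` game, tracking `F = S + T` and the
remaining target `R`, where `R v = 0` encodes that `v` has been removed. Removed vertices may
still be saved or decremented, which is harmless; only live vertices are subject to the
nonnegativity constraint on the shield, which reads `R v ≤ F v`. -/
inductive Win (G : SimpleGraph V) : (V → ℕ) → (V → ℕ) → Prop
  | done (F R : V → ℕ) (h : ∀ v, R v = 0) : Win G F R
  | shade (F R : V → ℕ) (u : V) (W : Finset V) (hu : 0 < R u) (hW : W.card ≤ 1)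
      (hF : ∀ w ∈ W, F w < F u)
      (hN : ∀ v, G.Adj u v → 0 < R v → v ∉ W → R v < F v)
      (h : Win G (fun v => if v = u ∨ (G.Adj u v ∧ v ∉ W) then F v - 1 else F v)
        (fun v => if v = u then R u - 1 else R v)) : Win G F R

/-- A win in the relaxed game yields a genuine complete restricted legal sequence: in each step
only the saved vertex that is still active and adjacent to `u` is kept. -/
lemma Win.st4DegOn {G : SimpleGraph V} {F R : V → ℕ} (h : Win G F R) :
    ∀ (A : Finset V) (S T : V → ℕ), (∀ v, v ∈ A ↔ 0 < R v) →
      (∀ v ∈ A, T v = R v ∧ S v + T v = F v) → ST4DegOn G A S T := by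
  induction h with
  | done F R h =>
    intro A S T hA _
    refine ⟨[], trivial, by simp, ?_⟩
    simp only [finalState, List.foldl_nil]
    ext v
    simp [hA, h]
  | shade F R u W hu hW hF hN _ ih =>
    intro A S T hA hST
    have huA : u ∈ A := (hA u).2 hu
    set W' : Finset V := W.filter (fun w => w ∈ A ∧ G.Adj u w) with hW'
    set st' := applyStep G ⟨A, S, T⟩ u W' with hst'
    have hAeq : ∀ v, v ∈ st'.A ↔ 0 < (if v = u then R u - 1 else R v) := by
      intro v
      have h1 := hST u huA
      by_cases hvu : v = u
      · subst hvu
        simp only [hst', applyStep, if_true]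
        split_ifs with h
        · simp
          omega
        · simp only [huA, true_iff]
          omega
      · simp only [hst', applyStep, if_neg hvu]
        split_ifs <;> simp [hvu, hA]
    have hSTeq : ∀ v ∈ st'.A, st'.T v = (if v = u then R u - 1 else R v) ∧
        st'.S v + st'.T v =
          (if v = u ∨ (G.Adj u v ∧ v ∉ W) then F v - 1 else F v) := by
      intro v hv
      have hv0 := (hAeq v).1 hv
      by_cases hvu : v = u
      · subst hvu
        rw [if_pos rfl] at hv0
        have h1 := hST v huA
        have h2 : 1 < T v := by omega
        simp [hst', applyStep, h2]
        omega
      · rw [if_neg hvu] at hv0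
        have hvA := (hA v).2 hv0
        have h1 := hST v hvA
        by_cases hadj : G.Adj u v
        · by_cases hvW : v ∈ W
          · have : v ∈ W' := by simp [hW', hvW, hvA, hadj]
            simp [hst', applyStep, hvu, this, hvW]
            omega
          · have : v ∉ W' := by simp [hW', hvW]
            have := hN v hadj hv0 hvW
            simp [applyStep, *]
            omega
        · simp [hst', applyStep, hvu, hadj]
          omega
    obtain ⟨l, hl, hcard, hfin⟩ := ih st'.A st'.S st'.T hAeq hSTeq
    have hW'c : W'.card ≤ 1 := (Finset.card_filter_le _ _).trans hW
    refine ⟨(u, W') :: l, ⟨⟨huA, ?_, ?_, ?_⟩, hl⟩, ?_, hfin⟩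
    · intro w hw
      simpa [hW'] using (Finset.mem_filter.1 hw).2
    · have h1 := hST u huA
      simp only
      have : Nonempty V := ⟨u⟩
      rcases Finset.card_le_one_iff_subset_singleton.1 hW'c with ⟨x, hx⟩
      rcases Finset.subset_singleton_iff.1 hx with h | h
      · rw [h, Finset.sum_empty]
        omega
      · have hxW : x ∈ W' := by simp [h]
        have hx := Finset.mem_filter.1 hxW
        rw [h, Finset.sum_singleton, (hST x hx.2.1).2, h1.2]
        exact hF x hx.1
    · intro v hv hadj hvW
      have hvW2 : v ∉ W := fun h => hvW (Finset.mem_filter.2 ⟨h, hv, hadj⟩)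
      have := hN v hadj ((hA v).1 hv) hvW2
      have := hST v hv
      simp only
      omega
    · intro op hop
      rcases List.mem_cons.1 hop with rfl | h
      · exact hW'c
      · exact hcard op h

/-- Once the live vertices are pairwise nonadjacent, they can be shaded in any order. -/
lemma Win.of_indep [Fintype V] {G : SimpleGraph V} (N : ℕ) :
    ∀ (F R : V → ℕ), ∑ v, R v = N → (∀ u v, 0 < R u → 0 < R v → ¬ G.Adj u v) → Win G F R := by
  induction N with
  | zero =>
    intro F R hs _
    exact Win.done F R fun v => (Finset.sum_eq_zero_iff.1 hs) v (Finset.mem_univ v)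
  | succ N ih =>
    intro F R hs hind
    obtain ⟨u, hu⟩ : ∃ u, 0 < R u := by
      by_contra! h
      have : ∑ v, R v = 0 := Finset.sum_eq_zero fun v _ => Nat.le_zero.1 (h v)
      omega
    refine Win.shade F R u ∅ hu (by simp) (by simp)
      (fun v hadj hv _ => absurd hadj (hind u v hu hv)) (ih _ _ ?_ ?_)
    · have h1 := Finset.add_sum_erase Finset.univ R (Finset.mem_univ u)
      have h2 := Finset.add_sum_erase Finset.univ (fun v => if v = u then R u - 1 else R v)
        (Finset.mem_univ u)
      have h3 : ∑ x ∈ Finset.univ.erase u, (if x = u then R u - 1 else R x)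
          = ∑ x ∈ Finset.univ.erase u, R x :=
        Finset.sum_congr rfl fun x hx => if_neg (Finset.ne_of_mem_erase hx)
      simp only [if_true, h3] at h2
      omega
    · intro a b ha hb
      refine hind a b ?_ ?_
      · split_ifs at ha with h
        · rw [h]; omega
        · exact ha
      · split_ifs at hb with h
        · rw [h]; omega
        · exact hb

/-- A removed vertex `v` with at most one live neighbor `x` can be revived with target `t` and
`f ≥ t + R x`: it waits until everything else is gone, losing at most `R x` shield. -/
lemma Win.add_leaf [Fintype V] {G : SimpleGraph V} {F R : V → ℕ} (h : Win G F R) (v x : V)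
    (t : ℕ) :
    ∀ f, R v = 0 → (∀ y, 0 < R y → G.Adj y v → y = x) → t + R x ≤ f →
      Win G (fun y => if y = v then f else F y) (fun y => if y = v then t else R y) := by
  induction h with
  | done F R h =>
    intro f _ _ _
    refine Win.of_indep _ _ _ rfl ?_
    intro a b ha hb
    simp only [h] at ha hb
    split_ifs at ha hb <;> simp_all
  | shade F R u W hu hW hF hN _ ih =>
    intro f hv hx hf
    have huv : u ≠ v := by
      rintro rfl
      omega
    refine Win.shade _ _ u (W.erase v) (by simpa [huv] using hu)
      ((Finset.card_erase_le).trans hW) ?_ ?_ ?_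
    · intro w hw
      obtain ⟨hwv, hw⟩ := Finset.mem_erase.1 hw
      simpa [hwv, huv] using hF w hw
    · intro y hadj hy hyW
      by_cases hyv : y = v
      · subst hyv
        have := hx u hu hadj
        subst this
        simp only [if_true]
        omega
      · simp only [if_neg hyv] at hy ⊢
        exact hN y hadj hy fun h => hyW (Finset.mem_erase.2 ⟨hyv, h⟩)
    · have hx' : ∀ y, 0 < (if y = u then R u - 1 else R y) → G.Adj y v → y = x := by
        intro y hy
        refine hx y ?_
        split_ifs at hy with h
        · rw [h]; exact hu
        · exact hy
      have hRv : (if v = u then R u - 1 else R v) = 0 := by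
        rw [if_neg huv.symm, hv]
      have hfin := ih (if G.Adj u v then f - 1 else f) hRv hx' (by
        by_cases hadj : G.Adj u v
        · have := hx u hu hadj
          subst this
          simp only [if_true, if_pos hadj]
          omega
        · rw [if_neg hadj]
          dsimp only
          split_ifs with h
          · subst h
            omega
          · exact hf)
      convert hfin using 1
      · funext y
        by_cases hyv : y = v
        · subst hyv
          simp [huv.symm]
        · simp [hyv]
      · funext y
        by_cases hyv : y = v
        · subst hyv
          simp [huv.symm]
        · simp [hyv, huv]

/-! ### The strategy on a cycle -/

/-- `c 0, …, c (n - 1)` are the distinct vertices of an induced cycle of `G`, in cyclic order. -/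
structure CycLabel (G : SimpleGraph V) (n : ℕ) (c : ℕ → V) : Prop where
  three_le : 3 ≤ n
  inj : ∀ d < n, ∀ e < n, c d = c e → d = e
  adj : ∀ d < n, ∀ e < n, G.Adj (c d) (c e) ↔
    (d + 1 = e ∨ e + 1 = d ∨ (d = 0 ∧ e + 1 = n) ∨ (e = 0 ∧ d + 1 = n))

lemma CycLabel.shift {G : SimpleGraph V} {n : ℕ} {c : ℕ → V} (L : CycLabel G n c) {a : ℕ}
    (ha : a < n) : CycLabel G n (fun d => c ((a + d) % n)) := by
  have hn := L.three_le
  have hmod : ∀ d < n, (a + d < n ∧ (a + d) % n = a + d) ∨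
      (n ≤ a + d ∧ (a + d) % n = a + d - n) := by
    intro d hd
    rcases lt_or_ge (a + d) n with h | h
    · exact Or.inl ⟨h, Nat.mod_eq_of_lt h⟩
    · exact Or.inr ⟨h, by rw [Nat.mod_eq_sub_mod h, Nat.mod_eq_of_lt (by omega)]⟩
  refine ⟨hn, ?_, ?_⟩
  · intro d hd e he h
    have := L.inj _ (Nat.mod_lt _ (by omega)) _ (Nat.mod_lt _ (by omega)) h
    have := hmod d hd
    have := hmod e he
    omega
  · intro d hd e he
    rw [L.adj _ (Nat.mod_lt _ (by omega)) _ (Nat.mod_lt _ (by omega))]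
    have := hmod d hd
    have := hmod e he
    omega

/-- The target function after the first `i` steps of a round shading `c 0, c 2, c 4, …`. -/
def roundTarget (c : ℕ → V) (R : V → ℕ) (i : ℕ) : V → ℕ :=
  fun v => if ∃ j < i, v = c (2 * j) then R v - 1 else R v

/-- The part of a round after its first step: `c (2 i)` is shaded while `c (2 i - 1)`, whose value
has just dropped to `f - 1`, is saved. Hence each `c (2 i - 1)` pays only once for its two shaded
neighbors. -/
lemma CycLabel.round_from {G : SimpleGraph V} {n : ℕ} {c : ℕ → V} (L : CycLabel G n c)
    (m f : ℕ) (R : V → ℕ) (hm1 : 2 * m ≤ n) (hm2 : n ≤ 2 * m + 1) (hf : 1 ≤ f)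
    (hlive : ∀ v, 0 < R v → ∃ d < n, v = c d)
    (hpos : ∀ i < m, 0 < R (c (2 * i)))
    (hR : ∀ i < m, R (c (2 * i + 1)) + 1 ≤ f)
    (hR' : 2 * m = n → R (c (n - 1)) + 2 ≤ f)
    (K : ∀ F : V → ℕ,
      (∀ d < n, F (c d) = if d + 1 = n ∧ 2 * m = n then f - 2 else f - 1) →
      Win G F (roundTarget c R m))
    (j : ℕ) : ∀ i, 1 ≤ i → i + j = m → ∀ F : V → ℕ,
      (∀ d < n, F (c d) = if d + 1 = n then (if 2 * i = n then f - 2 else f - 1)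
        else if d < 2 * i then f - 1 else f) →
      Win G F (roundTarget c R i) := by
  have hn := L.three_le
  induction j with
  | zero =>
    intro i _ hi F hF
    obtain rfl : i = m := by omega
    refine K F fun d hd => ?_
    rw [hF d hd]
    split_ifs <;> omega
  | succ j ih =>
    intro i hi hij F hF
    have hle : ∀ v, roundTarget c R i v ≤ R v := by
      intro v
      unfold roundTarget
      split_ifs <;> omega
    have hRu : roundTarget c R i (c (2 * i)) = R (c (2 * i)) := by
      refine if_neg ?_
      rintro ⟨k, hk, h⟩
      have := L.inj _ (by omega) _ (by omega) h
      omega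
    have hiff : ∀ d < n, (c d = c (2 * i) ∨
        (G.Adj (c (2 * i)) (c d) ∧ c d ∉ ({c (2 * i - 1)} : Finset V))) ↔
          (d = 2 * i ∨ d = 2 * i + 1) := by
      intro d hd
      have h1 : c d = c (2 * i) ↔ d = 2 * i :=
        ⟨L.inj d hd _ (by omega), fun h => by rw [h]⟩
      have h2 : c d = c (2 * i - 1) ↔ d = 2 * i - 1 :=
        ⟨L.inj d hd _ (by omega), fun h => by rw [h]⟩
      rw [Finset.mem_singleton, h1, h2, L.adj _ (by omega) d hd]
      omega
    refine Win.shade F _ (c (2 * i)) {c (2 * i - 1)} (by rw [hRu]; exact hpos i (by omega))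
      (by simp) ?_ ?_ ?_
    · intro w hw
      rw [Finset.mem_singleton.1 hw, hF _ (by omega), hF _ (by omega)]
      split_ifs <;> omega
    · intro v hadj hv hvW
      obtain ⟨d, hd, rfl⟩ := hlive v (lt_of_lt_of_le hv (hle v))
      have h1 := (hiff d hd).1 (Or.inr ⟨hadj, hvW⟩)
      have h2 : d = 2 * i + 1 := by
        rcases h1 with rfl | h1
        · exact absurd hadj (SimpleGraph.irrefl G)
        · exact h1
      subst h2
      refine lt_of_le_of_lt (hle _) ?_
      have h3 := hR i (by omega)
      rw [hF _ hd]
      by_cases h4 : 2 * i + 1 + 1 = n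
      · have h5 := hR' (by omega)
        have h6 : n - 1 = 2 * i + 1 := by omega
        rw [h6] at h5
        rw [if_pos h4, if_neg (by omega)]
        omega
      · rw [if_neg h4, if_neg (by omega)]
        omega
    · have hnext := ih (i + 1) (by omega) (by omega)
        (fun v => if v = c (2 * i) ∨ (G.Adj (c (2 * i)) v ∧ v ∉ ({c (2 * i - 1)} : Finset V))
          then F v - 1 else F v) (by
          intro d hd
          rw [if_congr (hiff d hd) rfl rfl, hF d hd]
          split_ifs <;> omega)
      convert hnext using 1
      funext v
      by_cases hv : v = c (2 * i)
      · subst hv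
        rw [if_pos rfl, hRu]
        exact (if_pos ⟨i, by omega, rfl⟩).symm
      · rw [if_neg hv]
        unfold roundTarget
        refine if_congr ⟨?_, ?_⟩ rfl rfl
        · rintro ⟨k, hk, h⟩
          exact ⟨k, by omega, h⟩
        · rintro ⟨k, hk, h⟩
          refine ⟨k, ?_, h⟩
          rcases Nat.lt_succ_iff_lt_or_eq.1 hk with h' | rfl
          · exact h'
          · exact absurd h hv

/-- One round on a cycle: shade `c 0, c 2, …, c (2 m - 2)`. If `F` is constant `f` except possibly
for the value `f - 1` at `c (n - 1)`, then afterwards it is constant `f - 1`, except for the value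
`f - 2` at `c (n - 1)` when `n = 2 m`. In the first step `c (n - 1)` is saved exactly when its
value is already `f - 1`. -/
lemma CycLabel.round {G : SimpleGraph V} {n : ℕ} {c : ℕ → V} (L : CycLabel G n c)
    (m f : ℕ) (F R : V → ℕ) (hm1 : 2 * m ≤ n) (hm2 : n ≤ 2 * m + 1)
    (hlive : ∀ v, 0 < R v → ∃ d < n, v = c d)
    (hpos : ∀ i < m, 0 < R (c (2 * i)))
    (hR : ∀ d < n, (∀ i < m, d ≠ 2 * i) → R (c d) + 1 ≤ f)
    (hR' : 2 * m = n → R (c (n - 1)) + 2 ≤ f)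
    (hF : ∀ d < n, d + 1 < n → F (c d) = f)
    (hF' : F (c (n - 1)) = f ∨ F (c (n - 1)) = f - 1)
    (K : ∀ F : V → ℕ,
      (∀ d < n, F (c d) = if d + 1 = n ∧ 2 * m = n then f - 2 else f - 1) →
      Win G F (roundTarget c R m)) :
    Win G F R := by
  have hn := L.three_le
  have hlast : R (c (n - 1)) + 1 ≤ f := hR _ (by omega) (fun i hi => by omega)
  have hf : 1 ≤ f := by omega
  have hone := hR 1 (by omega) (fun i hi => by omega)
  set W : Finset V := if F (c (n - 1)) = f then ∅ else {c (n - 1)} with hW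
  have hWmem : ∀ v, v ∈ W ↔ F (c (n - 1)) ≠ f ∧ v = c (n - 1) := by
    intro v
    rw [hW]
    split_ifs with h <;> simp [h]
  have h0 : F (c 0) = f := hF 0 (by omega) (by omega)
  have hiff : ∀ d < n, (c d = c 0 ∨ (G.Adj (c 0) (c d) ∧ c d ∉ W)) ↔
      (d = 0 ∨ d = 1 ∨ (d + 1 = n ∧ F (c (n - 1)) = f)) := by
    intro d hd
    have h1 : c d = c 0 ↔ d = 0 := ⟨L.inj d hd _ (by omega), fun h => by rw [h]⟩
    have h2 : c d = c (n - 1) ↔ d = n - 1 :=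
      ⟨L.inj d hd _ (by omega), fun h => by rw [h]⟩
    rw [hWmem, h1, h2, L.adj _ (by omega) d hd]
    omega
  refine Win.shade F R (c 0) W (by simpa using hpos 0 (by omega)) ?_ ?_ ?_ ?_
  · rw [hW]
    split_ifs <;> simp
  · intro w hw
    obtain ⟨h1, rfl⟩ := (hWmem w).1 hw
    omega
  · intro v hadj hv hvW
    obtain ⟨d, hd, rfl⟩ := hlive v hv
    rcases (hiff d hd).1 (Or.inr ⟨hadj, hvW⟩) with rfl | rfl | ⟨h1, h2⟩
    · exact absurd hadj (SimpleGraph.irrefl G)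
    · rw [hF 1 hd (by omega)]
      omega
    · obtain rfl : d = n - 1 := by omega
      omega
  · have hnext := L.round_from m f R hm1 hm2 hf hlive hpos
      (fun i hi => hR _ (by omega) (fun k hk => by omega)) hR' K (m - 1) 1 le_rfl (by omega)
      (fun v => if v = c 0 ∨ (G.Adj (c 0) v ∧ v ∉ W) then F v - 1 else F v) (by
        intro d hd
        rw [if_congr (hiff d hd) rfl rfl]
        by_cases h1 : d + 1 = n
        · obtain rfl : d = n - 1 := by omega
          split_ifs <;> omega
        · rw [hF d hd (by omega)]
          split_ifs <;> omega)
    convert hnext using 1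
    funext v
    unfold roundTarget
    by_cases hv : v = c 0
    · subst hv
      rw [if_pos rfl, if_pos ⟨0, by omega, by simp⟩]
    · rw [if_neg hv, if_neg]
      rintro ⟨k, hk, h⟩
      obtain rfl : k = 0 := by omega
      exact hv h

/-- Even cycles: with `s = t + 1`, shade the even vertices in `t` rounds. -/
lemma CycLabel.win_even [Fintype V] {G : SimpleGraph V} {m : ℕ} {c : ℕ → V}
    (L : CycLabel G (2 * m) c) (t : ℕ) (R₀ F₀ : V → ℕ)
    (hlive : ∀ v, 0 < R₀ v → ∃ d < 2 * m, v = c d) (hR₀ : ∀ d < 2 * m, R₀ (c d) = t)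
    (hF₀ : ∀ d < 2 * m, F₀ (c d) = 2 * t + 1) : Win G F₀ R₀ := by
  have hn := L.three_le
  -- State after `t - q` rounds; the defect at the last vertex appears in the first round.
  have key : ∀ q ≤ t, ∀ F R : V → ℕ, (∀ v, 0 < R v → ∃ d < 2 * m, v = c d) →
      (∀ d < 2 * m, R (c d) = if d % 2 = 0 then q else t) →
      (∀ d < 2 * m, d + 1 < 2 * m → F (c d) = t + 1 + q) →
      (F (c (2 * m - 1)) = t + 1 + q ∨ F (c (2 * m - 1)) = t + 1 + q - 1) → Win G F R := by
    intro q
    induction q with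
    | zero =>
      intro _ F R hl hR _ _
      refine Win.of_indep _ F R rfl ?_
      intro u v hu hv hadj
      obtain ⟨d, hd, rfl⟩ := hl u hu
      obtain ⟨e, he, rfl⟩ := hl v hv
      rw [hR d hd] at hu
      rw [hR e he] at hv
      rw [L.adj d hd e he] at hadj
      split_ifs at hu hv <;> omega
    | succ q ih =>
      intro hq F R hl hR hF hF'
      refine L.round m (t + 1 + (q + 1)) F R le_rfl (by omega) hl ?_ ?_ ?_ hF hF' ?_
      · intro i hi
        rw [hR _ (by omega), if_pos (by omega)]
        omega
      · intro d hd _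
        rw [hR d hd]
        split_ifs <;> omega
      · intro _
        rw [hR _ (by omega)]
        split_ifs <;> omega
      · intro F' hF'
        refine ih (by omega) F' _ ?_ ?_ ?_ ?_
        · intro v hv
          refine hl v (lt_of_lt_of_le hv ?_)
          unfold roundTarget
          split_ifs <;> omega
        · intro d hd
          have hex : (∃ j < m, c d = c (2 * j)) ↔ d % 2 = 0 := by
            constructor
            · rintro ⟨j, hj, h⟩
              have := L.inj d hd _ (by omega) h
              omega
            · intro h
              exact ⟨d / 2, by omega, by congr 1; omega⟩
          unfold roundTarget
          rw [if_congr hex rfl rfl, hR d hd]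
          split_ifs <;> omega
        · intro d hd hd'
          rw [hF' d hd, if_neg (by omega)]
          omega
        · rw [hF' _ (by omega), if_pos (by omega)]
          omega
  refine key t le_rfl F₀ R₀ hlive ?_ ?_ ?_
  · intro d hd
    rw [hR₀ d hd]
    split_ifs <;> rfl
  · intro d hd _
    rw [hF₀ d hd]
    omega
  · left
    rw [hF₀ _ (by omega)]
    omega

/-- Odd cycles: with `s = k + 1`, `t = k`, play `2 k + 1` rounds, the round `r` starting at `c r`.
Every vertex is shaded in exactly `k` rounds and loses one unit of shield in each of the others,
so `F` stays constant along the cycle between rounds. -/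
lemma CycLabel.win_odd {G : SimpleGraph V} {k : ℕ} {c : ℕ → V}
    (L : CycLabel G (2 * k + 1) c) (R₀ F₀ : V → ℕ)
    (hlive : ∀ v, 0 < R₀ v → ∃ d < 2 * k + 1, v = c d) (hR₀ : ∀ d < 2 * k + 1, R₀ (c d) = k)
    (hF₀ : ∀ d < 2 * k + 1, F₀ (c d) = 2 * k + 1) : Win G F₀ R₀ := by
  have hn := L.three_le
  obtain ⟨n, hnk⟩ : ∃ n, n = 2 * k + 1 := ⟨_, rfl⟩
  rw [← hnk] at L hlive hR₀ hF₀ hn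
  -- The remaining target before round `r`: the number of rounds from `r` on that shade `v`.
  let Q : ℕ → V → ℕ := fun r v =>
    ((Finset.Ico r n).filter (fun a => ∃ i < k, v = c ((a + 2 * i) % n))).card
  have hQlive : ∀ r v, 0 < Q r v → ∃ d < n, v = c d := by
    intro r v h
    obtain ⟨a, ha⟩ := Finset.card_pos.1 h
    obtain ⟨_, i, _, rfl⟩ := Finset.mem_filter.1 ha
    exact ⟨_, Nat.mod_lt _ (by omega), rfl⟩
  have hQsucc : ∀ r < n, ∀ v, Q r v =
      (if ∃ i < k, v = c ((r + 2 * i) % n) then 1 else 0) + Q (r + 1) v := by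
    intro r hr v
    simp only [Q]
    rw [← Finset.insert_Ico_add_one_left_eq_Ico hr, Finset.filter_insert]
    split_ifs
    · rw [Finset.card_insert_of_notMem (by simp)]
      omega
    · omega
  have hQle : ∀ r v, Q r v ≤ n - r := by
    intro r v
    refine (Finset.card_filter_le _ _).trans ?_
    simp
  have key : ∀ q r, r + q = n → ∀ F : V → ℕ, (∀ d < n, F (c d) = n - r) → Win G F (Q r) := by
    intro q
    induction q with
    | zero =>
      intro r hr F _
      refine Win.done F _ fun v => ?_
      have := hQle r v
      omega
    | succ q ih =>
      intro r hr F hF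
      have hrn : r < n := by omega
      have Lr := L.shift hrn
      -- Between rounds `F` has the same value at all labels, so it is insensitive to the shift.
      have hF' : ∀ d, F (c ((r + d) % n)) = n - r := fun d => hF _ (Nat.mod_lt _ (by omega))
      refine Lr.round k (n - r) F (Q r) (by omega) (by omega) ?_ ?_ ?_ ?_ ?_ ?_ ?_
      · intro v hv
        obtain ⟨d, hd, rfl⟩ := hQlive r v hv
        rcases le_or_gt r d with h | h
        · refine ⟨d - r, by omega, ?_⟩
          rw [show r + (d - r) = d by omega, Nat.mod_eq_of_lt hd]
        · refine ⟨d + n - r, by omega, ?_⟩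
          rw [show r + (d + n - r) = d + n by omega, Nat.add_mod_right, Nat.mod_eq_of_lt hd]
      · intro i hi
        rw [hQsucc r hrn, if_pos ⟨i, hi, rfl⟩]
        omega
      · intro d hd hne
        rw [hQsucc r hrn, if_neg]
        · have := hQle (r + 1) (c ((r + d) % n))
          omega
        · rintro ⟨i, hi, h⟩
          exact hne i hi (Lr.inj d hd _ (by omega) h)
      · intro h
        omega
      · intro d _ _
        exact hF' d
      · exact Or.inl (hF' _)
      · intro F' hF'
        have hround : roundTarget (fun d => c ((r + d) % n)) (Q r) k = Q (r + 1) := by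
          funext v
          unfold roundTarget
          rw [hQsucc r hrn v]
          split_ifs <;> omega
        rw [hround]
        refine ih (r + 1) (by omega) F' fun d hd => ?_
        obtain ⟨e, he, hde⟩ : ∃ e < n, (r + e) % n = d := by
          rcases le_or_gt r d with h | h
          · refine ⟨d - r, by omega, ?_⟩
            rw [show r + (d - r) = d by omega, Nat.mod_eq_of_lt hd]
          · refine ⟨d + n - r, by omega, ?_⟩
            rw [show r + (d + n - r) = d + n by omega, Nat.add_mod_right, Nat.mod_eq_of_lt hd]
        have := hF' e he
        rw [hde, if_neg (by omega)] at this
        omega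
  have hQ0 : Q 0 = R₀ := by
    funext v
    by_cases hv : ∃ d < n, v = c d
    · obtain ⟨d, hd, rfl⟩ := hv
      rw [hR₀ d hd]
      -- The rounds shading `c d` start at `d, d - 2, …, d - 2 (k - 1)` modulo `n`.
      have himg : (Finset.Ico 0 n).filter (fun a => ∃ i < k, c d = c ((a + 2 * i) % n)) =
          (Finset.range k).image (fun i => (d + n - 2 * i) % n) := by
        ext a
        simp only [Finset.mem_filter, Finset.mem_Ico, Finset.mem_image, Finset.mem_range]
        constructor
        · rintro ⟨⟨_, ha⟩, i, hi, h⟩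
          refine ⟨i, hi, ?_⟩
          have h1 := L.inj d hd _ (Nat.mod_lt _ (by omega)) h
          rcases lt_or_ge (a + 2 * i) n with h2 | h2
          · rw [Nat.mod_eq_of_lt h2] at h1
            rw [show d + n - 2 * i = a + n by omega, Nat.add_mod_right, Nat.mod_eq_of_lt ha]
          · rw [Nat.mod_eq_sub_mod h2, Nat.mod_eq_of_lt (by omega)] at h1
            rw [show d + n - 2 * i = a by omega, Nat.mod_eq_of_lt ha]
        · rintro ⟨i, hi, rfl⟩
          refine ⟨⟨Nat.zero_le _, Nat.mod_lt _ (by omega)⟩, i, hi, ?_⟩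
          rw [Nat.mod_add_mod, show d + n - 2 * i + 2 * i = d + n by omega, Nat.add_mod_right,
            Nat.mod_eq_of_lt hd]
      simp only [Q]
      rw [himg, Finset.card_image_of_injOn, Finset.card_range]
      intro i hi j hj hij
      simp only [Finset.coe_range, Set.mem_Iio] at hi hj
      have hmod : ∀ i < k, (d + n - 2 * i < n ∧ (d + n - 2 * i) % n = d + n - 2 * i) ∨
          (n ≤ d + n - 2 * i ∧ (d + n - 2 * i) % n = d + n - 2 * i - n) := by
        intro i hi
        rcases lt_or_ge (d + n - 2 * i) n with h | h
        · exact Or.inl ⟨h, Nat.mod_eq_of_lt h⟩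
        · exact Or.inr ⟨h, by rw [Nat.mod_eq_sub_mod h, Nat.mod_eq_of_lt (by omega)]⟩
      have h1 := hmod i hi
      have h2 := hmod j hj
      dsimp only at hij
      omega
    · have h1 : ¬ 0 < R₀ v := fun h => hv (hlive v h)
      have h2 : ¬ 0 < Q 0 v := fun h => hv (hQlive 0 v h)
      omega
  rw [← hQ0]
  refine key n 0 (by omega) F₀ fun d hd => ?_
  rw [hF₀ d hd]
  omega

/-! ### Lower bounds on the fractional chromatic number -/

lemma ABColorable.two_mul_le {G : SimpleGraph V} {a b : ℕ} (h : ABColorable G a b) {u v : V}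
    (huv : G.Adj u v) : 2 * b ≤ a := by
  obtain ⟨f, hf, hd⟩ := h
  have h1 := Finset.card_union_of_disjoint (hd u v huv)
  have h2 := Finset.card_le_univ (f u ∪ f v)
  rw [h1, hf, hf, Fintype.card_fin] at h2
  omega

/-- On an odd cycle of length `2 k + 1` each color is used at most `k` times, since it meets each
of the `2 k + 1` edges at most once and every vertex lies on two edges. -/
lemma ABColorable.odd_cycle {G : SimpleGraph V} {a b k : ℕ} (h : ABColorable G a b)
    {c : ℕ → V} (L : CycLabel G (2 * k + 1) c) : (2 * k + 1) * b ≤ k * a := by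
  obtain ⟨f, hf, hd⟩ := h
  have hn := L.three_le
  have hcolor : ∀ x : Fin a,
      ∑ i ∈ Finset.range (2 * k + 1), (if x ∈ f (c i) then 1 else 0) ≤ k := by
    intro x
    set g : ℕ → ℕ := fun i => if x ∈ f (c i) then 1 else 0 with hg
    have hadj : ∀ i < 2 * k + 1, ∀ j < 2 * k + 1, G.Adj (c i) (c j) → g i + g j ≤ 1 := by
      intro i _ j _ hij
      have := fun h : x ∈ f (c i) => Finset.disjoint_left.1 (hd _ _ hij) h
      simp only [hg]
      split_ifs <;> simp_all
    have h1 : ∑ i ∈ Finset.range (2 * k), (g i + g (i + 1)) ≤ 2 * k := by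
      calc ∑ i ∈ Finset.range (2 * k), (g i + g (i + 1))
          ≤ ∑ i ∈ Finset.range (2 * k), 1 := by
            refine Finset.sum_le_sum fun i hi => ?_
            have := Finset.mem_range.1 hi
            exact hadj i (by omega) (i + 1) (by omega)
              ((L.adj _ (by omega) _ (by omega)).2 (Or.inl rfl))
        _ = 2 * k := by simp
    have h2 : g 0 + g (2 * k) ≤ 1 :=
      hadj 0 (by omega) (2 * k) (by omega) ((L.adj _ (by omega) _ (by omega)).2 (by omega))
    rw [Finset.sum_add_distrib] at h1
    have h3 := Finset.sum_range_succ g (2 * k)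
    have h4 := Finset.sum_range_succ' g (2 * k)
    have h5 : ∑ i ∈ Finset.range (2 * k + 1), g i ≤ k := by omega
    exact h5
  calc (2 * k + 1) * b = ∑ i ∈ Finset.range (2 * k + 1), (f (c i)).card := by simp [hf]
    _ = ∑ i ∈ Finset.range (2 * k + 1), ∑ x : Fin a, (if x ∈ f (c i) then 1 else 0) := by simp
    _ = ∑ x : Fin a, ∑ i ∈ Finset.range (2 * k + 1), (if x ∈ f (c i) then 1 else 0) :=
        Finset.sum_comm
    _ ≤ ∑ _x : Fin a, k := Finset.sum_le_sum fun x _ => hcolor x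
    _ = k * a := by simp [mul_comm]

/-! ### The structure of unicyclic graphs -/

/-- In a graph with a unique cycle `p`, an edge whose ends are joined by a walk avoiding that edge
lies on `p`. -/
lemma mem_edges_of_unique {G : SimpleGraph V} {v₀ : V} {p : G.Walk v₀ v₀}
    (huniq : ∀ (v : V) (q : G.Walk v v), q.IsCycle → q.edges.toFinset = p.edges.toFinset)
    {a b : V} (hab : G.Adj a b) (w : G.Walk a b) (hw : s(a, b) ∉ w.edges) :
    s(a, b) ∈ p.edges := by
  obtain ⟨u, q, hq, hmem⟩ := SimpleGraph.adj_and_reachable_delete_edges_iff_exists_cycle.1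
    ⟨hab, ⟨w.toDeleteEdge _ hw⟩⟩
  have h := huniq u q hq
  have h1 : s(a, b) ∈ q.edges.toFinset := List.mem_toFinset.2 hmem
  rw [h] at h1
  exact List.mem_toFinset.1 h1

/-- The unique cycle has no chord, so its vertices form an induced cycle. -/
lemma cycLabel_of_unique {G : SimpleGraph V} {v₀ : V} {p : G.Walk v₀ v₀} (hp : p.IsCycle)
    (huniq : ∀ (v : V) (q : G.Walk v v), q.IsCycle → q.edges.toFinset = p.edges.toFinset) :
    CycLabel G p.length p.getVert := by
  have hn := hp.three_le_length
  have hinj : ∀ d < p.length, ∀ e < p.length, p.getVert d = p.getVert e → d = e := by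
    intro d hd e he h
    exact hp.getVert_injOn' (by simp only [Set.mem_ofPred_eq]; omega)
      (by simp only [Set.mem_ofPred_eq]; omega) h
  have hwrap : p.getVert p.length = p.getVert 0 := by simp
  refine ⟨hn, hinj, ?_⟩
  intro d hd e he
  constructor
  · intro hadj
    have hedge : s(p.getVert d, p.getVert e) ∈ p.edges := by
      by_contra hcon
      have hd' : p.getVert d ∈ p.support := p.getVert_mem_support d
      have he' : p.getVert e ∈ p.support := p.getVert_mem_support e
      refine hcon (mem_edges_of_unique huniq hadj
        ((p.takeUntil _ hd').reverse.append (p.takeUntil _ he')) ?_)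
      rw [SimpleGraph.Walk.edges_append, SimpleGraph.Walk.edges_reverse, List.mem_append,
        List.mem_reverse]
      rintro (h | h)
      · exact hcon (p.edges_takeUntil_subset_edges hd' h)
      · exact hcon (p.edges_takeUntil_subset_edges he' h)
    obtain ⟨i, hi, h⟩ := p.mk_mem_edges_iff_exists.1 hedge
    have hnext : ∀ j < p.length, p.getVert (i + 1) = p.getVert j →
        i + 1 = j ∨ (j = 0 ∧ i + 1 = p.length) := by
      intro j hj hij
      rcases (show i + 1 ≤ p.length from hi).lt_or_eq with h1 | h1
      · exact Or.inl (hinj _ h1 j hj hij)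
      · rw [h1, hwrap] at hij
        exact Or.inr ⟨(hinj 0 (by omega) j hj hij).symm, h1⟩
    rcases Sym2.eq_iff.1 h with ⟨h1, h2⟩ | ⟨h1, h2⟩
    · have := hinj i hi d hd h1
      have := hnext e he h2
      omega
    · have := hinj i hi e he h1
      have := hnext d hd h2
      omega
  · rintro (rfl | rfl | ⟨rfl, h⟩ | ⟨rfl, h⟩)
    · exact p.adj_getVert_succ hd
    · exact (p.adj_getVert_succ he).symm
    · rw [← hwrap, ← h]
      exact (p.adj_getVert_succ he).symm
    · rw [← hwrap, ← h]
      exact p.adj_getVert_succ hd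

/-- Winning positions propagate from the cycle to the whole graph, one pendant vertex
at a time: a vertex outside `A` has at most one neighbor in the connected set `A` containing the
cycle, and its shield `s ≥ t` survives all shadings of that neighbor. -/
lemma win_univ [Fintype V] {G : SimpleGraph V} (hconn : G.Connected) {v₀ : V} {p : G.Walk v₀ v₀}
    (huniq : ∀ (v : V) (q : G.Walk v v), q.IsCycle → q.edges.toFinset = p.edges.toFinset)
    {s t : ℕ} (hst : t ≤ s) (N : ℕ) :
    ∀ A : Finset V, (Finset.univ \ A).card = N → (∀ v ∈ p.support, v ∈ A) →
      (∀ a ∈ A, ∃ w : G.Walk v₀ a, ∀ z ∈ w.support, z ∈ A) →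
      (∃ F : V → ℕ, (∀ v ∈ A, F v = s + t) ∧ Win G F (fun v => if v ∈ A then t else 0)) →
      ∃ F : V → ℕ, (∀ v, F v = s + t) ∧ Win G F (fun _ => t) := by
  induction N with
  | zero =>
    intro A hA _ _ ⟨F, hF, hwin⟩
    have hall : ∀ v, v ∈ A := by
      intro v
      by_contra hv
      have : v ∈ Finset.univ \ A := by simp [hv]
      rw [Finset.card_eq_zero.1 hA] at this
      simp at this
    exact ⟨F, fun v => hF v (hall v), by simpa [hall] using hwin⟩
  | succ N ih =>
    intro A hA hsupp hreach ⟨F, hF, hwin⟩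
    have hv₀ : v₀ ∈ A := hsupp _ p.start_mem_support
    obtain ⟨b, hb⟩ : (Finset.univ \ A).Nonempty := by
      rw [← Finset.card_pos]
      omega
    have hbA : b ∉ A := by simpa using hb
    obtain ⟨w⟩ := hconn.preconnected v₀ b
    obtain ⟨d, _, hx, hv⟩ := w.exists_boundary_dart (A : Set V) (by simpa using hv₀)
      (by simpa using hbA)
    obtain ⟨⟨x, v⟩, hxv⟩ := d
    simp only [Finset.mem_coe] at hx hv hxv
    -- A second neighbor of `v` in `A` would put `v` on the cycle.
    have hone : ∀ y ∈ A, G.Adj y v → y = x := by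
      intro y hy hyv
      by_contra hne
      obtain ⟨wx, hwx⟩ := hreach x hx
      obtain ⟨wy, hwy⟩ := hreach y hy
      have hmem := mem_edges_of_unique huniq hxv ((wx.reverse.append wy).concat hyv) (by
        rw [SimpleGraph.Walk.edges_concat, List.concat_eq_append, List.mem_append,
          List.mem_singleton, SimpleGraph.Walk.edges_append, SimpleGraph.Walk.edges_reverse,
          List.mem_append, List.mem_reverse]
        rintro ((h | h) | h)
        · exact hv (hwx _ (wx.snd_mem_support_of_mem_edges h))
        · exact hv (hwy _ (wy.snd_mem_support_of_mem_edges h))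
        · have := Sym2.congr_left.1 h
          exact hne this.symm)
      exact hv (hsupp _ (p.snd_mem_support_of_mem_edges hmem))
    refine ih (insert v A) ?_ ?_ ?_ ?_
    · have : Finset.univ \ A = insert v (Finset.univ \ insert v A) := by
        ext z
        by_cases hz : z = v <;> simp [hz, hv]
      rw [this, Finset.card_insert_of_notMem (by simp)] at hA
      omega
    · intro z hz
      exact Finset.mem_insert_of_mem (hsupp z hz)
    · intro a ha
      rcases Finset.mem_insert.1 ha with rfl | ha
      · obtain ⟨wx, hwx⟩ := hreach x hx
        refine ⟨wx.concat hxv, fun z hz => ?_⟩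
        rw [SimpleGraph.Walk.support_concat, List.mem_append, List.mem_singleton] at hz
        rcases hz with hz | rfl
        · exact Finset.mem_insert_of_mem (hwx z hz)
        · exact Finset.mem_insert_self _ _
      · obtain ⟨wa, hwa⟩ := hreach a ha
        exact ⟨wa, fun z hz => Finset.mem_insert_of_mem (hwa z hz)⟩
    · have hleaf := hwin.add_leaf v x t (s + t) (by simp [hv])
        (fun y hy hyv => hone y (by by_contra h; simp [h] at hy) hyv)
        (by simp only [if_pos hx]; omega)
      refine ⟨fun y => if y = v then s + t else F y, ?_, ?_⟩
      swap
      · convert hleaf using 1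
        funext y
        by_cases hyv : y = v
        · simp [hyv]
        · simp [hyv]
      · intro y hy
        by_cases hyv : y = v
        · simp [hyv]
        · simp only [if_neg hyv]
          exact hF y (by simpa [hyv] using hy)

/-- A strategy on the unique cycle alone makes the whole graph degenerate, as soon as `t ≤ s`. -/
lemma st4Deg_of_cycle [Fintype V] {G : SimpleGraph V} (hconn : G.Connected) {v₀ : V}
    {p : G.Walk v₀ v₀} (hp : p.IsCycle)
    (huniq : ∀ (v : V) (q : G.Walk v v), q.IsCycle → q.edges.toFinset = p.edges.toFinset)
    {s t : ℕ} (hst : t ≤ s)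
    (hwin : ∀ R F : V → ℕ, (∀ v, 0 < R v → ∃ d < p.length, v = p.getVert d) →
      (∀ d < p.length, R (p.getVert d) = t) → (∀ d < p.length, F (p.getVert d) = s + t) →
      Win G F R) (ht : 1 ≤ t) :
    ST4Deg G (fun _ => s) (fun _ => t) := by
  have hn := hp.three_le_length
  obtain ⟨F, hF, hw⟩ := win_univ hconn huniq hst _ p.support.toFinset rfl
    (fun v hv => List.mem_toFinset.2 hv) (fun a ha => by
      have ha' := List.mem_toFinset.1 ha
      exact ⟨p.takeUntil a ha', fun z hz =>
        List.mem_toFinset.2 (p.support_takeUntil_subset_support ha' hz)⟩)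
    ⟨fun _ => s + t, fun _ _ => rfl, hwin _ _ (fun v hv => by
        have hv' : v ∈ p.support := by
          by_contra h
          simp [h] at hv
        obtain ⟨i, hi, hle⟩ := SimpleGraph.Walk.mem_support_iff_exists_getVert.1 hv'
        rcases hle.lt_or_eq with h | h
        · exact ⟨i, h, hi.symm⟩
        · refine ⟨0, by omega, ?_⟩
          rw [← hi, h]
          simp)
      (fun d _ => by simp) (fun _ _ => rfl)⟩
  refine hw.st4DegOn _ _ _ (fun v => ?_) (fun v _ => ?_)
  · simp
    omega
  · simp [hF]

/-! ### Conclusion -/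

/-- The sandwich behind the theorem: any `r` that bounds all `a / b` from below and is approached
by degenerate pairs is the common value of both infima. -/
lemma star_eq_of_bounds [Fintype V] (G : SimpleGraph V) (r : ℝ)
    (hlow : ∀ a b : ℕ, 1 ≤ b → ABColorable G a b → r ≤ (a : ℝ) / b)
    (hup : ∀ ε : ℝ, 0 < ε → ∃ s t : ℕ, 1 ≤ t ∧ ST4Deg G (fun _ => s) (fun _ => t) ∧
      ((s : ℝ) + t) / t ≤ r + ε) : ST4Star G = FracChrom G := by
  have hbdd : BddBelow { x : ℝ | ∃ s t : ℕ, 1 ≤ t ∧ ST4Deg G (fun _ => s) (fun _ => t) ∧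
      x = ((s : ℝ) + t) / t } := ⟨0, by rintro x ⟨s, t, _, _, rfl⟩; positivity⟩
  have hbdd' : BddBelow { x : ℝ | ∃ a b : ℕ, 1 ≤ b ∧ b ≤ a ∧ ABColorable G a b ∧
      x = (a : ℝ) / b } := ⟨0, by rintro x ⟨s, t, _, _, _, rfl⟩; positivity⟩
  obtain ⟨s₀, t₀, ht₀, hd₀, _⟩ := hup 1 one_pos
  refine le_antisymm (le_trans (b := r) ?_ ?_) ?_
  · refine le_of_forall_pos_le_add fun ε hε => ?_
    obtain ⟨s, t, ht, hd, hle⟩ := hup ε hε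
    exact (csInf_le hbdd ⟨s, t, ht, hd, rfl⟩).trans hle
  · refine le_csInf ⟨_, s₀ + t₀, t₀, ht₀, by omega, hd₀.abColorable ht₀, rfl⟩ ?_
    rintro x ⟨a, b, hb, _, hab, rfl⟩
    exact hlow a b hb hab
  · refine le_csInf ⟨_, s₀, t₀, ht₀, hd₀, rfl⟩ ?_
    rintro x ⟨s, t, ht, hd, rfl⟩
    exact csInf_le hbdd' ⟨s + t, t, ht, by omega, hd.abColorable ht, by push_cast; rfl⟩

/-- For any unicyclic graph `G` (a connected graph containing exactly one
cycle, i.e. exactly one edge set of a cycle), `ST⁽⁴⁾*(G) = χ*(G)`. -/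
theorem st4Star_unicyclic {V : Type} [Fintype V] (G : SimpleGraph V)
    (hconn : G.Connected)
    (hcyc : ∃! C : Finset (Sym2 V), ∃ (v : V) (p : G.Walk v v),
        p.IsCycle ∧ p.edges.toFinset = C) :
    ST4Star G = FracChrom G := by
  obtain ⟨C, ⟨v₀, p, hp, hpC⟩, huniq'⟩ := hcyc
  have huniq : ∀ (v : V) (q : G.Walk v v), q.IsCycle →
      q.edges.toFinset = p.edges.toFinset := by
    intro v q hq
    rw [hpC]
    exact huniq' _ ⟨v, q, hq, rfl⟩
  have L := cycLabel_of_unique hp huniq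
  have hn := hp.three_le_length
  rcases Nat.even_or_odd' p.length with ⟨k, hk | hk⟩
  · refine star_eq_of_bounds G 2 ?_ ?_
    · intro a b hb hab
      have h := hab.two_mul_le (p.adj_getVert_succ (i := 0) (by omega))
      rw [le_div_iff₀ (by exact_mod_cast hb)]
      exact_mod_cast h
    · intro ε hε
      obtain ⟨t, ht⟩ := exists_nat_one_div_lt hε
      refine ⟨t + 2, t + 1, by omega, ?_, ?_⟩
      · refine st4Deg_of_cycle hconn hp huniq (by omega) ?_ (by omega)
        rw [hk] at L ⊢
        intro R F hl hR hF
        refine L.win_even (t + 1) R F hl hR fun d hd => ?_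
        rw [hF d hd]
        omega
      · have : (((t + 2 : ℕ) : ℝ) + ((t + 1 : ℕ) : ℝ)) / ((t + 1 : ℕ) : ℝ)
            = 2 + 1 / ((t : ℝ) + 1) := by
          push_cast
          field_simp
          ring
        rw [this]
        linarith
  · have hk1 : 1 ≤ k := by omega
    have hk0 : (0 : ℝ) < k := by exact_mod_cast hk1
    refine star_eq_of_bounds G ((2 * k + 1 : ℝ) / k) ?_ ?_
    · intro a b hb hab
      rw [hk] at L
      have h := hab.odd_cycle L
      have hb0 : (0 : ℝ) < b := by exact_mod_cast hb
      rw [div_le_div_iff₀ hk0 hb0, mul_comm (a : ℝ)]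
      exact_mod_cast h
    · intro ε hε
      refine ⟨k + 1, k, hk1, ?_, ?_⟩
      · refine st4Deg_of_cycle hconn hp huniq (by omega) ?_ hk1
        rw [hk] at L ⊢
        intro R F hl hR hF
        refine L.win_odd R F hl hR fun d hd => ?_
        rw [hF d hd]
        omega
      · have : ((k + 1 : ℕ) : ℝ) + (k : ℝ) = 2 * k + 1 := by
          push_cast
          ring
        rw [this]
        linarith

end StrictDeg
end
end

section
/- Suppose v_1,…,v_n is an arbitrary ordering of the vertices of a graph G, and for each i let N_i^- = {v_j ∈ N_G(v_i) : j < i}. If S is a shield and T is a target of G satisfying S(v_i) ≥ Σ_{v_j ∈ N_i^-} T(v_j) for each i ∈ {1,…,n}, then G is ST^(4)-(S,T)-degenerate. Consequently, G is ST^(4)-(col(G)−1, 1)-degenerate and ST^(4)*(G) ≤ col(G), where col(G), the coloring number of G, is one plus the least d such that some ordering of V(G) has every vertex with at most d neighbors among the preceding vertices. -/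
/-!
The vertices are processed in the given order, never saving anything (`W = ∅`), and each vertex is
repeated until its target is used up. The invariant is that every remaining vertex `v` has shield
at least the total current target of its remaining predecessors. If `u` is the first remaining
vertex, each remaining neighbor `v` of `u` comes after `u`, so its shield is at least
`T u ≥ 1`; the operation on `u` is therefore legal, and it lowers both sides of the invariant by one
for each such `v`. `st4DegOn_of_rank` carries out this argument by induction on the total remaining
target. With `T = 1` and an ordering attaining the coloring number, this gives the other two claims.
-/

open scoped Classical

noncomputable section

namespace StrictDeg

variable {V : Type}

/-- The coloring number of `G`: one plus the least `d` such that some ordering of the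
vertices of `G` has every vertex with at most `d` neighbors among the preceding vertices. -/
def colNum {V : Type} [Fintype V] (G : SimpleGraph V) : ℕ :=
  1 + sInf { d : ℕ | ∃ e : Fin (Fintype.card V) ≃ V, ∀ i : Fin (Fintype.card V),
      (Finset.univ.filter (fun j => j < i ∧ G.Adj (e i) (e j))).card ≤ d }

/-- The greedy argument for an induced subgraph `G[A]`, the ordering being given by an injective
rank function `r`. -/
theorem st4DegOn_of_rank (G : SimpleGraph V) (r : V → ℕ) (hr : Function.Injective r) (n : ℕ) :
    ∀ (A : Finset V) (S T : V → ℕ), (∑ v ∈ A, T v) = n → (∀ v ∈ A, 1 ≤ T v) →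
      (∀ v ∈ A, (∑ w ∈ A.filter (fun w => r w < r v ∧ G.Adj v w), T w) ≤ S v) →
      ST4DegOn G A S T := by
  induction n with
  | zero =>
    intro A S T hn hT _
    refine ⟨[], trivial, by simp, ?_⟩
    refine Finset.eq_empty_of_forall_notMem fun v hv => ?_
    have h0 := Finset.sum_eq_zero_iff.mp hn v hv
    have h1 := hT v hv
    omega
  | succ n ih =>
    intro A S T hn hT hS
    have hA : A.Nonempty := by
      by_contra h
      rw [Finset.not_nonempty_iff_eq_empty] at h
      simp [h] at hn
    obtain ⟨u, hu, hmin⟩ := Finset.exists_min_image A r hA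
    have hTu := hT u hu
    have hlt : ∀ v ∈ A, G.Adj u v → r u < r v := fun v hv huv =>
      lt_of_le_of_ne (hmin v hv) fun h => huv.ne (hr h)
    have hlegal : LegalStep G ⟨A, S, T⟩ u ∅ := by
      refine ⟨hu, by simp, by simpa using by omega, fun v hv huv _ => ?_⟩
      have hmem : u ∈ A.filter (fun w => r w < r v ∧ G.Adj v w) := by
        simp [hu, hlt v hv huv, huv.symm]
      have h1 := Finset.single_le_sum (f := T) (fun _ _ => Nat.zero_le _) hmem
      exact hTu.trans (h1.trans (hS v hv))
    -- One operation on `u` removes exactly one unit of target from any set containing `u`.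
    have hdrop : ∀ (p : V → Prop) [DecidablePred p],
        (∑ w ∈ (applyStep G ⟨A, S, T⟩ u ∅).A.filter p, (applyStep G ⟨A, S, T⟩ u ∅).T w)
          + (if p u then 1 else 0) = ∑ w ∈ A.filter p, T w := by
      intro p _
      by_cases h1 : T u = 1
      · have hTeq : (applyStep G ⟨A, S, T⟩ u ∅).T = T := by
          funext w; simp [applyStep, h1]
        have hAeq : (applyStep G ⟨A, S, T⟩ u ∅).A = A.erase u := by
          simp [applyStep, h1]
        rw [hTeq, hAeq, Finset.filter_erase]
        by_cases hp : p u
        · rw [if_pos hp, ← Finset.sum_erase_add (A.filter p) T (a := u) (by simp [hu, hp]), h1]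
        · rw [if_neg hp, Finset.erase_eq_of_notMem (by simp [hp]), add_zero]
      · have hAeq : (applyStep G ⟨A, S, T⟩ u ∅).A = A := by
          simp [applyStep, h1]
        have hTne : ∀ w, w ≠ u → (applyStep G ⟨A, S, T⟩ u ∅).T w = T w := by
          intro w hw; simp [applyStep, hw]
        have hTeq : (applyStep G ⟨A, S, T⟩ u ∅).T u = T u - 1 := by
          have : 1 < T u := by omega
          simp [applyStep, this]
        rw [hAeq]
        by_cases hp : p u
        · have hmem : u ∈ A.filter p := by simp [hu, hp]
          have hrest : (∑ w ∈ (A.filter p).erase u, (applyStep G ⟨A, S, T⟩ u ∅).T w)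
              = ∑ w ∈ (A.filter p).erase u, T w :=
            Finset.sum_congr rfl fun w hw => hTne w (Finset.ne_of_mem_erase hw)
          have hnew := Finset.sum_erase_add _ (applyStep G ⟨A, S, T⟩ u ∅).T hmem
          have hold : (∑ w ∈ (A.filter p).erase u, T w) + T u = ∑ w ∈ A.filter p, T w :=
            Finset.sum_erase_add _ T hmem
          rw [if_pos hp]
          omega
        · rw [if_neg hp, add_zero]
          refine Finset.sum_congr rfl fun w hw => hTne w ?_
          rintro rfl
          exact hp (Finset.mem_filter.mp hw).2
    have hsub : (applyStep G ⟨A, S, T⟩ u ∅).A ⊆ A := by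
      simp only [applyStep]
      split_ifs
      · exact Finset.erase_subset _ _
      · exact subset_rfl
    obtain ⟨l, hl, hcard, hfin⟩ := ih (applyStep G ⟨A, S, T⟩ u ∅).A
      (applyStep G ⟨A, S, T⟩ u ∅).S (applyStep G ⟨A, S, T⟩ u ∅).T
      (by
        have h := hdrop (fun _ => True)
        simp only [Finset.filter_true, if_true] at h
        omega)
      (by
        intro v hv
        have h := hT v (hsub hv)
        simp only [applyStep]
        split_ifs <;> omega)
      (by
        intro v hv
        have hvA := hsub hv
        have h := hdrop (fun w => r w < r v ∧ G.Adj v w)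
        have h' := hS v hvA
        by_cases huv : G.Adj u v
        · have hSeq : (applyStep G ⟨A, S, T⟩ u ∅).S v = S v - 1 := by
            simp [applyStep, huv, hvA]
          rw [if_pos ⟨hlt v hvA huv, huv.symm⟩] at h
          omega
        · have hSeq : (applyStep G ⟨A, S, T⟩ u ∅).S v = S v := by
            simp [applyStep, huv]
          omega)
    exact ⟨(u, ∅) :: l, ⟨hlegal, hl⟩, by simpa using hcard, hfin⟩

theorem st4Deg_of_order [Fintype V] (G : SimpleGraph V)
    (e : Fin (Fintype.card V) ≃ V) (S T : V → ℕ) (hT : ∀ v, 1 ≤ T v)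
    (hS : ∀ i : Fin (Fintype.card V),
      (∑ j ∈ Finset.univ.filter (fun j => j < i ∧ G.Adj (e i) (e j)), T (e j)) ≤ S (e i)) :
    ST4Deg G S T := by
  refine st4DegOn_of_rank G (fun v => (e.symm v : ℕ))
    (fun a b h => e.symm.injective (Fin.ext h)) _ Finset.univ S T rfl (fun v _ => hT v) ?_
  intro v _
  obtain ⟨i, rfl⟩ := e.surjective v
  refine le_trans (le_of_eq ?_) (hS i)
  rw [Finset.sum_filter, Finset.sum_filter, ← Equiv.sum_comp e]
  simp

/-- The infimum in `colNum` is attained, the set of admissible `d` being nonempty as soon as an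
ordering `e` exists. -/
theorem st4Deg_colNum [Fintype V] (G : SimpleGraph V) (e : Fin (Fintype.card V) ≃ V) :
    ST4Deg G (fun _ => colNum G - 1) (fun _ => 1) := by
  have hne : { d : ℕ | ∃ e : Fin (Fintype.card V) ≃ V, ∀ i : Fin (Fintype.card V),
      (Finset.univ.filter (fun j => j < i ∧ G.Adj (e i) (e j))).card ≤ d }.Nonempty :=
    ⟨(Finset.univ : Finset (Fin (Fintype.card V))).card, e,
      fun i => Finset.card_le_card (Finset.filter_subset _ _)⟩
  obtain ⟨e', he'⟩ := Nat.sInf_mem hne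
  refine st4Deg_of_order G e' _ _ (fun _ => le_rfl) fun i => ?_
  rw [← Finset.card_eq_sum_ones, colNum, Nat.add_sub_cancel_left]
  exact he' i

/-- Suppose `v_1, …, v_n` is an arbitrary ordering of the vertices of a
graph `G` (given by an equivalence `e`), and for each `i` let
`N_i⁻ = {v_j ∈ N_G(v_i) : j < i}`.  If `S` is a shield and `T` is a target of `G` satisfying
`S(v_i) ≥ Σ_{v_j ∈ N_i⁻} T(v_j)` for each `i`, then `G` is `ST⁽⁴⁾`-`(S,T)`-degenerate.
Consequently, `G` is `ST⁽⁴⁾`-`(col(G)−1, 1)`-degenerate and `ST⁽⁴⁾*(G) ≤ col(G)`. -/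
theorem st4Deg_of_back_degree {V : Type} [Fintype V] (G : SimpleGraph V)
    (e : Fin (Fintype.card V) ≃ V) (S T : V → ℕ) (hT : ∀ v, 1 ≤ T v)
    (hS : ∀ i : Fin (Fintype.card V),
      (∑ j ∈ Finset.univ.filter (fun j => j < i ∧ G.Adj (e i) (e j)), T (e j)) ≤ S (e i)) :
    ST4Deg G S T ∧
    ST4Deg G (fun _ => colNum G - 1) (fun _ => 1) ∧
    ST4Star G ≤ (colNum G : ℝ) := by
  have hcol := st4Deg_colNum G e
  refine ⟨st4Deg_of_order G e S T hT hS, hcol, csInf_le ⟨0, ?_⟩ ⟨colNum G - 1, 1, le_rfl, hcol, ?_⟩⟩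
  · rintro x ⟨s, t, -, -, rfl⟩
    positivity
  · have h1 : 1 ≤ colNum G := Nat.le_add_right _ _
    push_cast [Nat.cast_sub h1]
    ring

end StrictDeg
end
end

section
/- For every integer r ≥ 2 and every t ∈ ℕ, the even cycle C_{2r} is ST^(4)-(t+1, t)-degenerate. -/
/-!
Label the cycle `0, 1, …, 2r-1`.  All operations are first spent on the even vertices, in `t`
rounds, each round visiting `0, 2, …, 2r-2` in this order.  Every visit to `2i` saves the
preceding vertex `2i-1` (cyclically) and shades the following vertex `2i+1`; the only exception is
the very first visit, which saves nothing and shades both neighbours.  When `2i` is visited in round `k` (counted from `0`)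
it has shield `t+1` and target `t-k`, while `2i-1` has target `t` and shield `t-k`: it has already
been shaded `k+1` times, the vertex `2r-1` owing its extra shading to the exceptional first visit.
So the save is legal, by a margin of one.  After `t` rounds the even vertices are gone, every odd
vertex has nonnegative shield, and the remaining graph has no edges (`good_of_indep`).

`RoundInv` records the state of the process, `roundInv_step` performs one visit.
-/

open scoped Classical

noncomputable section

namespace StrictDeg

variable {V : Type}

/-! ### Completing the process from a given state -/

/-- The process started from `st` can be completed by a restricted legal sequence. -/
def Good (G : SimpleGraph V) (st : State V) : Prop :=
  ∃ l : List (V × Finset V),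
    LegalSeq G st l ∧ (∀ op ∈ l, op.2.card ≤ 1) ∧ (finalState G st l).A = ∅

lemma Good.step {G : SimpleGraph V} {st : State V} {u : V} {W : Finset V}
    (hW : W.card ≤ 1) (hl : LegalStep G st u W) (h : Good G (applyStep G st u W)) :
    Good G st := by
  obtain ⟨l, h1, h2, h3⟩ := h
  refine ⟨(u, W) :: l, ⟨hl, h1⟩, ?_, h3⟩
  intro op hop
  rcases List.mem_cons.1 hop with rfl | hop
  · exact hW
  · exact h2 op hop

/-- Once no edges remain, the remaining vertices can be used up without any saving; the induction
is on the total remaining target. -/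
lemma good_of_indep (G : SimpleGraph V) (n : ℕ) : ∀ st : State V,
    (∀ x ∈ st.A, ∀ y ∈ st.A, ¬ G.Adj x y) → (∀ x ∈ st.A, 1 ≤ st.T x) →
    ∑ x ∈ st.A, st.T x = n → Good G st := by
  induction n with
  | zero =>
    intro st _ hT hn
    refine ⟨[], trivial, by simp, ?_⟩
    refine Finset.eq_empty_of_forall_notMem fun x hx => ?_
    have h0 := Finset.sum_eq_zero_iff.1 hn x hx
    have h1 := hT x hx
    omega
  | succ n ih =>
    intro st hA hT hn
    obtain ⟨u, hu⟩ : st.A.Nonempty := by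
      rw [Finset.nonempty_iff_ne_empty]
      intro h
      simp [h] at hn
    have hTu := hT u hu
    refine Good.step (u := u) (W := ∅) (by simp)
      ⟨hu, by simp, by simp; omega, fun v hv hadj => absurd hadj (hA u hu v hv)⟩ ?_
    have hsum := Finset.add_sum_erase st.A st.T hu
    have herase : ∑ x ∈ st.A.erase u, (applyStep G st u ∅).T x = ∑ x ∈ st.A.erase u, st.T x := by
      refine Finset.sum_congr rfl fun x hx => ?_
      simp [applyStep, (Finset.mem_erase.1 hx).1]
    have hsub : (applyStep G st u ∅).A ⊆ st.A := by
      simp only [applyStep]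
      split_ifs
      · exact Finset.erase_subset _ _
      · exact subset_rfl
    refine ih _ (fun x hx y hy => hA x (hsub hx) y (hsub hy)) ?_ ?_
    · intro x hx
      have := hT x (hsub hx)
      simp only [applyStep]
      split_ifs <;> omega
    · by_cases h1 : st.T u = 1
      · have : (applyStep G st u ∅).A = st.A.erase u := by simp [applyStep, h1]
        rw [this, herase]
        omega
      · have : (applyStep G st u ∅).A = st.A := by simp [applyStep, h1]
        rw [this, ← Finset.add_sum_erase st.A _ hu, herase]
        have : (applyStep G st u ∅).T u = st.T u - 1 :=
          if_pos ⟨rfl, by omega⟩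
        omega

/-! ### The rounds on the even cycle -/

lemma cycleGraph_adj_val {n : ℕ} (hn : 4 ≤ n) (u v : Fin n) :
    (SimpleGraph.cycleGraph n).Adj u v ↔
      v.val = u.val + 1 ∨ u.val = v.val + 1 ∨ (u.val = 0 ∧ v.val = n - 1) ∨
        (v.val = 0 ∧ u.val = n - 1) := by
  have key : ∀ a b : Fin n, (a - b).val = 1 ↔
      a.val = b.val + 1 ∨ (a.val = 0 ∧ b.val = n - 1) := by
    intro a b
    have ha := a.isLt
    have hb := b.isLt
    rw [Fin.val_sub]
    rcases lt_or_ge (n - b.val + a.val) n with h | h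
    · rw [Nat.mod_eq_of_lt h]
      omega
    · rw [Nat.mod_eq_sub_mod h, Nat.mod_eq_of_lt (by omega)]
      omega
  rw [SimpleGraph.cycleGraph_adj', key, key]
  tauto

/-- The number of visits to the vertex `2i` after `k` full
rounds and `j` visits of the next round. -/
def visits (k j i : ℕ) : ℕ := if i < j then k + 1 else k

/-- The state of the process on `C_{2r}` after `k` full rounds and `j` visits of the next round.
A vertex `x` has index `x / 2`, so the odd vertex `2i+1` has been shaded as often as `2i` has been
visited, with one more shading of `2r-1` from the very first visit. -/
structure RoundInv (r t k j : ℕ) (st : State (Fin (2 * r))) : Prop where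
  even_mem : ∀ x : Fin (2 * r), x.val % 2 = 0 → (x ∈ st.A ↔ visits k j (x.val / 2) < t)
  even_S : ∀ x : Fin (2 * r), x.val % 2 = 0 → st.S x = t + 1
  even_T : ∀ x : Fin (2 * r), x.val % 2 = 0 → visits k j (x.val / 2) < t →
    st.T x = t - visits k j (x.val / 2)
  odd_mem : ∀ x : Fin (2 * r), x.val % 2 = 1 → x ∈ st.A
  odd_T : ∀ x : Fin (2 * r), x.val % 2 = 1 → st.T x = t
  odd_S : ∀ x : Fin (2 * r), x.val % 2 = 1 →
    st.S x = t + 1 - visits k j (x.val / 2) -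
      (if x.val = 2 * r - 1 ∧ 1 ≤ k + j then 1 else 0)

/-- One visit: the state is advanced by the legal operation at `2j` that saves the preceding odd
vertex, or nothing if this is the very first visit. -/
lemma roundInv_step {r t k j : ℕ} (hr : 2 ≤ r) (hk : k < t) (hj : j < r)
    {st : State (Fin (2 * r))} (h : RoundInv r t k j st) :
    ∃ (u : Fin (2 * r)) (W : Finset (Fin (2 * r))), W.card ≤ 1 ∧
      LegalStep (SimpleGraph.cycleGraph (2 * r)) st u W ∧
      RoundInv r t k (j + 1) (applyStep (SimpleGraph.cycleGraph (2 * r)) st u W) := by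
  obtain ⟨hem, heS, heT, hom, hoT, hoS⟩ := h
  obtain ⟨u, hu⟩ : ∃ u : Fin (2 * r), u.val = 2 * j := ⟨⟨2 * j, by omega⟩, rfl⟩
  obtain ⟨w, hw⟩ : ∃ w : Fin (2 * r), w.val = if j = 0 then 2 * r - 1 else 2 * j - 1 :=
    ⟨⟨if j = 0 then 2 * r - 1 else 2 * j - 1, by split_ifs <;> omega⟩, rfl⟩
  have hw1 : w.val % 2 = 1 := by rw [hw]; split_ifs <;> omega
  have hadj := fun v => cycleGraph_adj_val (n := 2 * r) (by omega) u v
  have hadj' : ∀ v, (SimpleGraph.cycleGraph (2 * r)).Adj u v ↔ v.val = 2 * j + 1 ∨ v = w := by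
    intro v
    have := v.isLt
    rw [hadj, Fin.ext_iff, hw, hu]
    split_ifs <;> omega
  have hvu : visits k j (u.val / 2) = k := by
    simp only [visits]; split_ifs <;> omega
  have huA : u ∈ st.A := (hem u (by omega)).2 (by omega)
  have huT : st.T u = t - k := by rw [heT u (by omega) (by omega), hvu]
  have huS : st.S u = t + 1 := heS u (by omega)
  obtain ⟨W, hW⟩ : ∃ W : Finset (Fin (2 * r)), W = if k + j = 0 then ∅ else {w} := ⟨_, rfl⟩
  have hmemW : ∀ x, x ∈ W ↔ (x = w ∧ 1 ≤ k + j) := by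
    intro x
    rw [hW]
    split_ifs with h0
    · simp; omega
    · simp; omega
  refine ⟨u, W, ?_, ⟨huA, ?_, ?_, ?_⟩, ?_⟩
  · rw [hW]; split_ifs <;> simp
  · intro x hx
    obtain ⟨rfl, _⟩ := (hmemW x).1 hx
    exact ⟨hom x hw1, (hadj' x).2 (Or.inr rfl)⟩
  · rw [hW]
    split_ifs with h0
    · simp; omega
    · rw [Finset.sum_singleton, hoT w hw1, hoS w hw1, huS, huT]
      -- `w` has been shaded `k + 1` times, so the left side is `(t - k) + t`.
      simp only [visits]
      split_ifs at hw ⊢ <;> omega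
  · intro v hv hav hvW
    rw [hmemW] at hvW
    have hv1 : v.val % 2 = 1 := by
      rcases (hadj' v).1 hav with h1 | h1
      · omega
      · rw [h1]; exact hw1
    rw [hoS v hv1]
    rw [hadj'] at hav
    rw [Fin.ext_iff] at hvW hav
    simp only [visits]
    split_ifs at hw ⊢ <;> omega
  · have hmemA : ∀ x, x ∈ (applyStep (SimpleGraph.cycleGraph (2 * r)) st u W).A ↔
        x ∈ st.A ∧ ¬ (x = u ∧ t - k = 1) := by
      intro x
      simp only [applyStep, huT]
      split_ifs with h1
      · simp [h1, and_comm]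
      · simp [h1]
    refine ⟨?_, ?_, ?_, ?_, ?_, ?_⟩
    · intro x hx
      rw [hmemA, hem x hx, Fin.ext_iff]
      simp only [visits]
      split_ifs <;> omega
    · intro x hx
      simp only [applyStep]
      rw [if_neg, heS x hx]
      rintro ⟨h1, -⟩
      rcases (hadj' x).1 h1 with h1 | h1
      · omega
      · rw [h1] at hx; omega
    · intro x hx hlt
      have hold := heT x hx
      simp only [applyStep, huT, Fin.ext_iff]
      simp only [visits] at hlt hold ⊢
      split_ifs at hlt hold ⊢ <;> omega
    · intro x hx
      rw [hmemA]
      exact ⟨hom x hx, fun hh => by rw [hh.1] at hx; omega⟩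
    · intro x hx
      simp only [applyStep]
      rw [if_neg, hoT x hx]
      rintro ⟨rfl, -⟩
      omega
    · intro x hx
      have hlt := x.isLt
      have hold := hoS x hx
      simp only [applyStep, hadj', hmemW, hom x hx, true_and, Fin.ext_iff]
      simp only [visits] at hold ⊢
      split_ifs at hw hold ⊢ <;> omega

lemma good_of_roundInv {r t : ℕ} (hr : 2 ≤ r) (ht : 1 ≤ t) (n : ℕ) :
    ∀ (k j : ℕ) (st : State (Fin (2 * r))), k ≤ t → j < r → (k = t → j = 0) →
      (t - k) * r - j = n → RoundInv r t k j st → Good (SimpleGraph.cycleGraph (2 * r)) st := by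
  induction n with
  | zero =>
    intro k j st hk hj hkt hn h
    obtain rfl : k = t := by
      by_contra hne
      have : 1 * r ≤ (t - k) * r := Nat.mul_le_mul_right r (by omega)
      omega
    obtain rfl := hkt rfl
    have hodd : ∀ x ∈ st.A, x.val % 2 = 1 := by
      intro x hx
      by_contra hne
      have := (h.even_mem x (by omega)).1 hx
      simp [visits] at this
    refine good_of_indep _ _ st ?_ ?_ rfl
    · intro x hx y hy hadj
      have h1 := hodd x hx
      have h2 := hodd y hy
      rw [cycleGraph_adj_val (by omega)] at hadj
      omega
    · intro x hx
      rw [h.odd_T x (hodd x hx)]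
      exact ht
  | succ n ih =>
    intro k j st hk hj hkt hn h
    have hlt : k < t := by
      rcases hk.lt_or_eq with h1 | rfl
      · exact h1
      · simp at hn
    obtain ⟨u, W, hW, hl, hs⟩ := roundInv_step hr hlt hj h
    refine Good.step hW hl ?_
    by_cases hj' : j + 1 < r
    · exact ih k (j + 1) _ hk hj' (by omega) (by omega) hs
    · have hjr : j + 1 = r := by omega
      -- The end of round `k` is the beginning of round `k + 1`.
      have hmul : (t - k) * r = (t - (k + 1)) * r + r := by
        rw [← Nat.succ_mul]
        congr 1
        omega
      have hv : ∀ x : Fin (2 * r), visits k (j + 1) (x.val / 2) = visits (k + 1) 0 (x.val / 2) := by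
        intro x
        have := x.isLt
        simp only [visits]
        split_ifs <;> omega
      obtain ⟨h1, h2, h3, h4, h5, h6⟩ := hs
      refine ih (k + 1) 0 _ hlt (by omega) (fun _ => rfl) (by omega) ⟨?_, h2, ?_, h4, h5, ?_⟩
      · intro x hx
        rw [h1 x hx, hv]
      · intro x hx
        rw [← hv]
        exact h3 x hx
      · intro x hx
        rw [h6 x hx, hv]
        congr 2
        simp
        omega

/-- For every integer `r ≥ 2` and every `t ∈ ℕ` (so `t ≥ 1`), the even cycle
`C_{2r}` is `ST⁽⁴⁾`-`(t+1, t)`-degenerate. -/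
theorem st4Deg_even_cycle (r : ℕ) (hr : 2 ≤ r) (t : ℕ) (ht : 1 ≤ t) :
    ST4Deg (SimpleGraph.cycleGraph (2 * r)) (fun _ => t + 1) (fun _ => t) := by
  refine good_of_roundInv hr ht _ 0 0 _ (by omega) (by omega) (fun _ => rfl) rfl
    ⟨?_, ?_, ?_, ?_, ?_, ?_⟩ <;> intro x hx <;> simp [visits]
  omega

end StrictDeg
end
end
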